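/- Under Condition (★), for every integer h ≥ 2, the infinite product over prime elements ∏_p (1 + N(p)^{−1}/(1 − N(p)^{−1/h}))·(1 − 1/N(p)) converges and equals γ_h := ∏_p (1 + (N(p) − N(p)^{1/h})/(N(p)²(N(p)^{1/h} − 1))), which is itself a convergent infinite product. -/

import Mathlib

open Filter Topology Asymptotics
open scoped Classical

noncomputable section

/-- The norm on the free abelian monoid `P →₀ ℕ`, extended multiplicatively
from the norm `N` on the prime elements. -/
def Nm {P : Type*} (N : P → ℕ) (m : P →₀ ℕ) : ℕ :=
  m.prod fun p k => N p ^ k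

/-- The number of distinct prime elements generating `m`. -/
def omegaM {P : Type*} (m : P →₀ ℕ) : ℕ := m.support.card

/-- `m` is `h`-free: every multiplicity is at most `h - 1`. -/
def HFree {P : Type*} (h : ℕ) (m : P →₀ ℕ) : Prop := ∀ p, m p ≤ h - 1

/-- `m` is `h`-full: every nonzero multiplicity is at least `h`. -/
def HFull {P : Type*} (h : ℕ) (m : P →₀ ℕ) : Prop := ∀ p, m p = 0 ∨ h ≤ m p

/-- Condition (★): `#{m : N(m) ≤ x} = κ·x + O(x^θ)` with `κ > 0`, `0 ≤ θ < 1`. -/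
def StarCond {P : Type*} (N : P → ℕ) (κ θ : ℝ) : Prop :=
  0 < κ ∧ 0 ≤ θ ∧ θ < 1 ∧
    (fun x : ℝ => (({m : P →₀ ℕ | (Nm N m : ℝ) ≤ x}.ncard : ℝ) - κ * x))
      =O[atTop] fun x : ℝ => x ^ θ

/-- The generalized zeta function `ζ_M(s) = ∑_m N(m)^{-s}`. -/
def zetaM {P : Type*} (N : P → ℕ) (s : ℝ) : ℝ :=
  ∑' m : P →₀ ℕ, 1 / (Nm N m : ℝ) ^ s

/-- The constant `γ_h`. -/
def gammah {P : Type*} (N : P → ℕ) (h : ℕ) : ℝ :=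
  ∏' p : P, (1 + ((N p : ℝ) - (N p : ℝ) ^ (1 / (h : ℝ))) /
    ((N p : ℝ) ^ 2 * ((N p : ℝ) ^ (1 / (h : ℝ)) - 1)))

/-- `A` is the Mertens constant `𝔄` of the prime system:
`𝔄 = lim (∑_{N(p) ≤ x} 1/N(p) − log log x)`. -/
def IsMertens {P : Type*} (N : P → ℕ) (A : ℝ) : Prop :=
  Tendsto (fun x : ℝ =>
      (∑ᶠ p ∈ {p : P | (N p : ℝ) ≤ x}, 1 / (N p : ℝ)) - Real.log (Real.log x))
    atTop (𝓝 A)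

/-- The constant `𝔅 = -π²/6`. -/
def Bconst : ℝ := -(Real.pi ^ 2) / 6

/-- The constant `ℭ₁`, given the Mertens constant `A`. -/
def C1const {P : Type*} (N : P → ℕ) (h : ℕ) (A : ℝ) : ℝ :=
  A - ∑' p : P, ((N p : ℝ) - 1) / ((N p : ℝ) * ((N p : ℝ) ^ h - 1))

/-- The constant `ℭ₂`, given the Mertens constant `A`. -/
def C2const {P : Type*} (N : P → ℕ) (h : ℕ) (A : ℝ) : ℝ :=
  C1const N h A ^ 2 + C1const N h A + Bconst -
    ∑' p : P, (((N p : ℝ) ^ (h - 1) - 1) / ((N p : ℝ) ^ h - 1)) ^ 2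

/-- The convergent series `𝔏_h(r)`. -/
def LhSum {P : Type*} (N : P → ℕ) (h : ℕ) (r : ℝ) : ℝ :=
  ∑' p : P, 1 / ((N p : ℝ) ^ (r / (h : ℝ) - 1) *
    ((N p : ℝ) - (N p : ℝ) ^ (1 - 1 / (h : ℝ)) + 1))

/-- The constant `𝔇₁`, given the Mertens constant `A`. -/
def D1const {P : Type*} (N : P → ℕ) (h : ℕ) (A : ℝ) : ℝ :=
  A - Real.log (h : ℝ) + LhSum N h ((h : ℝ) + 1) - LhSum N h (2 * (h : ℝ))

/-- The constant `𝔇₂`, given the Mertens constant `A`. -/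
def D2const {P : Type*} (N : P → ℕ) (h : ℕ) (A : ℝ) : ℝ :=
  D1const N h A ^ 2 + D1const N h A + Bconst -
    ∑' p : P, (1 / ((N p : ℝ) - (N p : ℝ) ^ (1 - 1 / (h : ℝ)) + 1)) ^ 2

/-- The error term `R_{S_h}(x)` for `h`-free counts. -/
def RSfree (h : ℕ) (θ : ℝ) (x : ℝ) : ℝ :=
  if 1 / (h : ℝ) < θ then x ^ θ
  else if 1 / (h : ℝ) = θ then x ^ (1 / (h : ℝ)) * Real.log x
  else x ^ (1 / (h : ℝ))

/-- The error term `R_{N_h}(x)` for `h`-full counts. -/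
def RNfull (h : ℕ) (θ : ℝ) (x : ℝ) : ℝ :=
  if (h : ℝ) / ((h : ℝ) + 1) < θ then x ^ (θ / (h : ℝ))
  else if ∃ i : ℕ, 1 ≤ i ∧ i ≤ h - 1 ∧ θ = (h : ℝ) / ((h : ℝ) + (i : ℝ)) then
    x ^ (1 / ((h : ℝ) + 1)) * Real.log x
  else x ^ (1 / ((h : ℝ) + 1))

/-- Prime counting bound. -/
lemma aux_count {P : Type*} (N : P → ℕ) (κ θ : ℝ) (hstar : StarCond N κ θ) :
    ∃ C : ℝ, 0 ≤ C ∧ ∀ x : ℝ, 1 ≤ x → ∀ S : Finset P, (∀ p ∈ S, (N p : ℝ) ≤ x) →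
      (S.card : ℝ) ≤ C * x := by
  obtain ⟨hκ, hθ, hθ1, hO⟩ := hstar
  have ho : (fun x : ℝ => (({m : P →₀ ℕ | (Nm N m : ℝ) ≤ x}.ncard : ℝ) - κ * x))
      =o[atTop] fun x : ℝ => x ^ (1:ℝ) := by
    refine hO.trans_isLittleO ?_
    rw [isLittleO_iff_tendsto' (by
      filter_upwards [eventually_gt_atTop 0] with x hx h0
      simp at h0; linarith)]
    refine (tendsto_rpow_neg_atTop (sub_pos.2 hθ1)).congr' ?_
    filter_upwards [eventually_gt_atTop 0] with x hx
    rw [← Real.rpow_sub hx, neg_sub]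
  have h1 := ho.bound (half_pos hκ)
  obtain ⟨x0, hx0⟩ := eventually_atTop.1 h1
  set y0 := max x0 1 with hy0
  have hy1 : 1 ≤ y0 := le_max_right _ _
  refine ⟨2 * κ * y0, by positivity, fun x hx S hS => ?_⟩
  have hyx : y0 ≤ y0 * x := by nlinarith
  have hxy : x ≤ y0 * x := by nlinarith
  have hpos : 0 < y0 * x := by positivity
  have h2 := hx0 (y0 * x) ((le_max_left _ _).trans hyx)
  rw [Real.rpow_one, Real.norm_eq_abs, Real.norm_eq_abs, abs_of_pos hpos, abs_le] at h2
  obtain ⟨h3, h4⟩ := h2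
  have hκp : 0 < κ * (y0 * x) := by positivity
  have hn : 0 < ({m : P →₀ ℕ | (Nm N m : ℝ) ≤ y0 * x}.ncard : ℝ) := by linarith
  have hfin := Set.finite_of_ncard_pos (by exact_mod_cast hn)
  have hle : S.card ≤ {m : P →₀ ℕ | (Nm N m : ℝ) ≤ y0 * x}.ncard := by
    have hinj : Function.Injective (fun p : P => Finsupp.single p 1) :=
      Finsupp.single_left_injective one_ne_zero
    rw [← Finset.card_image_of_injective S hinj, ← Set.ncard_coe_finset]
    apply Set.ncard_le_ncard _ hfin
    intro m hm
    simp only [Finset.coe_image, Set.mem_image, Finset.mem_coe] at hm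
    obtain ⟨p, hp, rfl⟩ := hm
    have := hS p hp
    simp only [Set.mem_ofPred_eq, Nm]
    rw [Finsupp.prod_single_index (by simp)]
    simpa using this.trans hxy
  have : (S.card : ℝ) ≤ ({m : P →₀ ℕ | (Nm N m : ℝ) ≤ y0 * x}.ncard : ℝ) := by
    exact_mod_cast hle
  nlinarith

/-- Summability from the counting bound. -/
lemma aux_summable {P : Type*} (N : P → ℕ) (hN : ∀ p, 2 ≤ N p) (κ θ : ℝ)
    (hstar : StarCond N κ θ) (a : ℝ) (ha : 0 < a) :
    Summable (fun p : P => ((N p : ℝ) * (N p : ℝ) ^ a)⁻¹) := by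
  obtain ⟨C, hC, hcount⟩ := aux_count N κ θ hstar
  set b : ℝ := (2:ℝ) ^ a with hb
  have hb1 : 1 < b := Real.one_lt_rpow (by norm_num) ha
  have hb0 : 0 < b := by linarith
  have hgeo : Summable (fun k : ℕ => 2 * C * (b⁻¹) ^ k) :=
    (summable_geometric_of_lt_one (by positivity) (inv_lt_one_of_one_lt₀ hb1)).mul_left _
  apply summable_of_sum_le (c := ∑' k : ℕ, 2 * C * (b⁻¹) ^ k) (fun p => by positivity)
  intro S
  rw [← Finset.sum_fiberwise_of_maps_to (g := fun p => Nat.log 2 (N p))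
    (t := S.image (fun p => Nat.log 2 (N p)))
    (fun p hp => Finset.mem_image_of_mem (fun p => Nat.log 2 (N p)) hp)]
  refine le_trans (Finset.sum_le_sum fun k _ => ?_)
    (hgeo.sum_le_tsum _ (fun k _ => by positivity))
  have h1 : ∀ p ∈ S.filter (fun p => Nat.log 2 (N p) = k),
      ((N p : ℝ) * (N p : ℝ) ^ a)⁻¹ ≤ ((2:ℝ) ^ k * b ^ k)⁻¹ := by
    intro p hp
    have hk := (Finset.mem_filter.1 hp).2
    have h2 : 2 ^ k ≤ N p := by
      rw [← hk]; exact Nat.pow_log_le_self 2 (by have := hN p; omega)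
    have h3 : (2:ℝ) ^ k ≤ N p := by exact_mod_cast h2
    have h4 : b ^ k = ((2:ℝ) ^ k) ^ a := by
      rw [hb, ← Real.rpow_natCast, ← Real.rpow_natCast, ← Real.rpow_mul (by norm_num),
        ← Real.rpow_mul (by norm_num), mul_comm]
    rw [h4]
    gcongr
  have h5 := hcount (2 ^ (k+1)) (one_le_pow₀ (by norm_num))
    (S.filter (fun p => Nat.log 2 (N p) = k)) (by
      intro p hp
      have hk := (Finset.mem_filter.1 hp).2
      have := Nat.lt_pow_succ_log_self (b := 2) (by norm_num) (N p)
      rw [hk] at this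
      exact_mod_cast this.le)
  refine (Finset.sum_le_card_nsmul _ _ _ h1).trans ?_
  rw [nsmul_eq_mul]
  calc _ ≤ C * 2 ^ (k+1) * ((2:ℝ) ^ k * b ^ k)⁻¹ := by gcongr
    _ = 2 * C * (b⁻¹) ^ k := by
      rw [inv_pow]; field_simp; ring

/-- The Euler-product identity for the constant `γ_h`. -/
theorem gammah_product {P : Type*} [Countable P] (N : P → ℕ)
    (hN : ∀ p, 2 ≤ N p) (κ θ : ℝ) (hstar : StarCond N κ θ)
    (h : ℕ) (hh : 2 ≤ h) :
    Multipliable (fun p : P =>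
      (1 + ((N p : ℝ))⁻¹ / (1 - (N p : ℝ) ^ (-(1 / (h : ℝ))))) *
        (1 - 1 / (N p : ℝ))) ∧
    Multipliable (fun p : P =>
      1 + ((N p : ℝ) - (N p : ℝ) ^ (1 / (h : ℝ))) /
        ((N p : ℝ) ^ 2 * ((N p : ℝ) ^ (1 / (h : ℝ)) - 1))) ∧
    (∏' p : P, ((1 + ((N p : ℝ))⁻¹ / (1 - (N p : ℝ) ^ (-(1 / (h : ℝ))))) *
        (1 - 1 / (N p : ℝ))))
      = gammah N h := by

  have ha : (0:ℝ) < 1 / (h : ℝ) := by positivity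
  have ha1 : 1 / (h : ℝ) ≤ 1 := by
    rw [div_le_one (by positivity)]; exact_mod_cast (by omega : 1 ≤ h)
  set a : ℝ := 1 / (h : ℝ) with hadef
  have hb1 : 1 < (2:ℝ) ^ a := Real.one_lt_rpow (by norm_num) ha
  have key : ∀ p : P, (1 + ((N p : ℝ))⁻¹ / (1 - (N p : ℝ) ^ (-a))) * (1 - 1 / (N p : ℝ))
      = 1 + ((N p : ℝ) - (N p : ℝ) ^ a) / ((N p : ℝ) ^ 2 * ((N p : ℝ) ^ a - 1)) := by
    intro p
    have hn : (2:ℝ) ≤ N p := by exact_mod_cast hN p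
    have ht : (1:ℝ) < (N p : ℝ) ^ a := Real.one_lt_rpow (by linarith) ha
    rw [Real.rpow_neg (by linarith)]
    generalize (N p : ℝ) ^ a = t at *
    generalize (N p : ℝ) = n at *
    have h1 : t - 1 ≠ 0 := by linarith
    have h2 : t ≠ 0 := by linarith
    have h3 : n ≠ 0 := by linarith
    have h4 : 1 - t⁻¹ = (t - 1) / t := by field_simp
    rw [h4]
    field_simp
    ring
  have hmul : Multipliable (fun p : P =>
      1 + ((N p : ℝ) - (N p : ℝ) ^ a) / ((N p : ℝ) ^ 2 * ((N p : ℝ) ^ a - 1))) := by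
    apply multipliable_one_add_of_summable
    have hc : 0 < 1 - ((2:ℝ) ^ a)⁻¹ := by
      have := inv_lt_one_of_one_lt₀ hb1
      linarith
    refine Summable.of_nonneg_of_le (fun p => norm_nonneg _) (fun p => ?_)
      ((aux_summable N hN κ θ hstar a ha).mul_left (1 - ((2:ℝ) ^ a)⁻¹)⁻¹)
    have hn : (2:ℝ) ≤ N p := by exact_mod_cast hN p
    have ht : (2:ℝ) ^ a ≤ (N p : ℝ) ^ a := by gcongr
    have htn : (N p : ℝ) ^ a ≤ N p := by
      simpa using Real.rpow_le_rpow_of_exponent_le (by linarith : (1:ℝ) ≤ N p) ha1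
    generalize (N p : ℝ) ^ a = t at *
    generalize (N p : ℝ) = n at *
    generalize (2:ℝ) ^ a = b at *
    have hn0 : 0 < n := by linarith
    have ht1 : 0 < t - 1 := by linarith
    have ht0 : 0 < t := by linarith
    have hb0 : 0 < b := by linarith
    have h6 : (1 - b⁻¹) * t ≤ t - 1 := by
      have : 1 ≤ b⁻¹ * t := by
        rw [inv_mul_eq_div, le_div_iff₀ hb0]; linarith
      linarith
    rw [Real.norm_of_nonneg (div_nonneg (by linarith) (by positivity)), ← mul_inv]
    calc (n - t) / (n ^ 2 * (t - 1)) ≤ n / (n ^ 2 * (t - 1)) := by gcongr; linarith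
      _ = (n * (t - 1))⁻¹ := by field_simp
      _ ≤ (n * ((1 - b⁻¹) * t))⁻¹ := by gcongr
      _ = _ := by congr 1; ring
  refine ⟨?_, hmul, ?_⟩
  · simp only [key]; exact hmul
  · simp only [key]; rfl
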